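/- For all integers n ≥ 1, r ≥ 1 and 0 ≤ d ≤ n, the number of r-parking functions is |P_{n,d}^r| = (n!/d!)·C(d(r−1)+n+1, n−d)·(d(r−1)+n+1)^{d−1}, i.e. d!·(d(r−1)+n+1)·|P_{n,d}^r| = n!·C(d(r−1)+n+1, n−d)·(d(r−1)+n+1)^{d}. -/

import Mathlib

/-- Steps of an `r`-Schröder path: down `(0,-1)`, right `(1,0)`, diagonal `(r,-1)`. -/
inductive SStep : Type
  | down | right | diag
deriving DecidableEq

/-- Displacement of a step for slope parameter `r`. -/
def sDisp (r : ℤ) : SStep → ℤ × ℤ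
  | .down => (0, -1)
  | .right => (1, 0)
  | .diag => (r, -1)

/-- Position reached after performing the steps `l`, starting at `(0, n)`. -/
def sPos (r n : ℤ) (l : List SStep) : ℤ × ℤ :=
  l.foldl (fun p s => p + sDisp r s) (0, n)

/-- `α` is an `r`-Schröder path of size `n`: it goes from `(0,n)` to `(r*n, 0)` and never
passes strictly above the line segment joining `(0,n)` and `(r*n,0)`
(the segment lies on the line `x + r*y = r*n`). -/
def IsSchroder (r n : ℕ) (α : List SStep) : Prop :=
  sPos r n α = ((r : ℤ) * n, 0) ∧
  ∀ β, β <+: α → (sPos r n β).1 + (r : ℤ) * (sPos r n β).2 ≤ (r : ℤ) * n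

/-- `Sch r n d` : the set of `r`-Schröder paths of size `n` with exactly `n - d`
diagonal steps. -/
def Sch (r n d : ℕ) : Set (List SStep) :=
  {α | IsSchroder r n α ∧ α.count SStep.diag = n - d}


/-- The left-area code of a path: scanning the steps with current `x`-coordinate,
each down step in a row contributes the entry `(x, false)` and each diagonal step
contributes `(x, true)` (a "barred" value); right steps contribute nothing.
For an `r`-Schröder path of size `n` this produces the list `(a_1,…,a_n)` of left
areas of the rows, with the bar marker on rows traversed by a diagonal step. -/
def sCode (r : ℤ) : ℤ → List SStep → List (ℤ × Bool)
  | _, [] => []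
  | x, .down :: t => (x, false) :: sCode r x t
  | x, .right :: t => sCode r (x + 1) t
  | x, .diag :: t => (x, true) :: sCode r (x + r) t

/-- `Pk r n d` : the set of `r`-parking functions, i.e. sequences obtained by permuting
the entries (with their bar markers) of the left-area code of some path in `Sch r n d`. -/
def Pk (r n d : ℕ) : Set (List (ℤ × Bool)) :=
  {l | ∃ α ∈ Sch r n d, l.Perm (sCode r 0 α)}

/-!
Shrink every diagonal step to width `1`. The code of the shrunk path determines the original code,
by an injection that commutes with permutations, so it suffices to count the rearrangements of the
shrunk codes. Let `k = n - d` and `m = r * d + k`. A list with `d` unbarred and `k` barred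
nonnegative entries is such a rearrangement iff its barred values are distinct and, for every
`x ≤ m`, the entries less than `x` have total weight at least `x`, where an unbarred entry weighs
`r` and a barred one weighs `1`. The total weight is `m`, so by the cycle lemma exactly one of the
`m + 1` cyclic shifts of a word over `ZMod (m + 1)` satisfies these inequalities, and shifting keeps
barred letters distinct. Hence `m + 1` times the number of parking functions is the number of all
words with `k` distinct barred letters, `n.choose k * (m + 1).descFactorial k * (m + 1) ^ d`.
-/

section CycleLemma

lemma exists_lt_forall_le_add {N : ℕ} (hN : 0 < N) {F : ℕ → ℤ} (hF : ∀ x, F (x + N) = F x - 1) :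
    ∃ s < N, ∀ x < N, F s ≤ F (s + x) := by
  obtain ⟨s, hsN, hmin⟩ := Finset.exists_min_image (Finset.range N) (fun s => toLex (F s, s))
    ⟨0, by simpa⟩
  have first_min (j : ℕ) (hj : j < N) : F s < F j ∨ F s = F j ∧ s ≤ j := by
    simpa [Prod.Lex.toLex_le_toLex] using hmin j (Finset.mem_range.mpr hj)
  rw [Finset.mem_range] at hsN
  refine ⟨s, hsN, fun x hx => ?_⟩
  rcases lt_or_ge (s + x) N with hlt | hge
  · have := first_min (s + x) hlt
    lia
  · obtain ⟨j, hj⟩ := Nat.exists_eq_add_of_le' hge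
    have := first_min j (by lia)
    rw [hj, hF]
    lia

lemma eq_of_forall_le_add {N : ℕ} {F : ℕ → ℤ} (hF : ∀ x, F (x + N) = F x - 1) {s t : ℕ}
    (hsN : s < N) (htN : t < N) (hs : ∀ x < N, F s ≤ F (s + x))
    (ht : ∀ x < N, F t ≤ F (t + x)) : s = t := by
  wlog hst : s ≤ t generalizing s t
  · exact (this htN hsN ht hs (le_of_not_ge hst)).symm
  by_contra hne
  have hs_le : F s ≤ F t := by
    simpa [Nat.add_sub_cancel' hst] using hs (t - s) (by lia)
  have ht_le : F t ≤ F s - 1 := by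
    have := ht (s + N - t) (by lia)
    rwa [Nat.add_sub_cancel' (by lia), hF] at this
  lia

lemma sum_range_natCast_zmod {N : ℕ} [NeZero N] {M : Type*} [AddCommMonoid M] (f : ZMod N → M) :
    ∑ j ∈ Finset.range N, f j = ∑ z, f z :=
  Finset.sum_nbij' (fun j => (j : ZMod N)) ZMod.val (by simp) (by simp [ZMod.val_lt])
    (fun j hj => ZMod.val_natCast_of_lt (Finset.mem_range.mp hj)) (by simp) (by simp)

/-- The cycle lemma of Dvoretzky and Motzkin: the good starting point is the first minimum of the
partial sums. -/
theorem existsUnique_forall_sum_range_nonneg {N : ℕ} [NeZero N] (f : ZMod N → ℤ)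
    (hf : ∑ z, f z = -1) :
    ∃! s : ZMod N, ∀ x < N, 0 ≤ ∑ y ∈ Finset.range x, f (s + (y : ℕ)) := by
  let F : ℕ → ℤ := fun x => ∑ j ∈ Finset.range x, f j
  have F_add (s x : ℕ) : F (s + x) = F s + ∑ y ∈ Finset.range x, f (s + (y : ℕ)) := by
    simp [F, Finset.sum_range_add]
  have F_period (x : ℕ) : F (x + N) = F x - 1 := by
    rw [add_comm, F_add N x]
    simp only [F, sum_range_natCast_zmod, hf, ZMod.natCast_self, zero_add]
    ring
  have good_iff (s : ZMod N) : (∀ x < N, 0 ≤ ∑ y ∈ Finset.range x, f (s + (y : ℕ))) ↔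
      ∀ x < N, F s.val ≤ F (s.val + x) := by
    simp [F_add]
  obtain ⟨s, hsN, hs⟩ := exists_lt_forall_le_add (NeZero.pos N) F_period
  simp only [good_iff]
  refine ⟨s, by simpa only [ZMod.val_natCast_of_lt hsN], fun t ht => ?_⟩
  rw [← eq_of_forall_le_add F_period t.val_lt hsN ht hs, ZMod.natCast_zmod_val]

end CycleLemma

section WeightedParking

/-- Cars `i` of length `w i` with preferred spots `g i` on a circular street of `N` spots, the
residue `x` standing for spot `x.val`: for every `x`, the cars that prefer the first `x` spots fill
them. -/
def IsWeightedParking {ι : Type*} [Fintype ι] {N : ℕ} (w : ι → ℕ) (g : ι → ZMod N) : Prop :=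
  ∀ x < N, x ≤ ∑ i with (g i).val < x, w i

lemma sum_filter_val_lt {ι M : Type*} [Fintype ι] [AddCommMonoid M] {N : ℕ} [NeZero N]
    (w : ι → M) (g : ι → ZMod N) {x : ℕ} (hx : x ≤ N) :
    ∑ i with (g i).val < x, w i = ∑ y ∈ Finset.range x, ∑ i with g i = (y : ZMod N), w i := by
  rw [← Finset.sum_fiberwise_of_maps_to (t := Finset.range x) (g := fun i => (g i).val)
    (by simp)]
  refine Finset.sum_congr rfl fun y hy => ?_
  have hyx := Finset.mem_range.mp hy
  rw [Finset.filter_filter]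
  congr! 2 with i
  constructor
  · rintro ⟨-, rfl⟩
    simp
  · intro h
    rw [h, ZMod.val_natCast_of_lt (hyx.trans_le hx)]
    exact ⟨hyx, rfl⟩

theorem existsUnique_isWeightedParking_vadd {ι : Type*} [Fintype ι] {N : ℕ} [NeZero N]
    {w : ι → ℕ} (hw : ∑ i, w i + 1 = N) (g : ι → ZMod N) :
    ∃! s : ZMod N, IsWeightedParking w (s +ᵥ g) := by
  let excess : ZMod N → ℤ := fun z => ((∑ i with g i = z, w i : ℕ) : ℤ) - 1
  have sum_excess : ∑ z, excess z = -1 := by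
    simp only [excess, Finset.sum_sub_distrib, ← Nat.cast_sum, Finset.sum_fiberwise]
    simp [← hw]
  refine ((Equiv.neg (ZMod N)).existsUnique_congr fun s => ?_).mpr
    (existsUnique_forall_sum_range_nonneg excess sum_excess)
  refine forall₂_congr fun x hx => ?_
  rw [sum_filter_val_lt w _ hx.le]
  simp only [excess, Finset.sum_sub_distrib, ← Nat.cast_sum, Equiv.neg_apply,
    eq_neg_add_iff_add_eq]
  simp only [Finset.sum_const, Finset.card_range, nsmul_one, sub_nonneg, Nat.cast_le]
  rfl

theorem card_mul_card_filter_of_existsUnique_vadd {G X : Type*} [AddGroup G] [Fintype G]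
    [AddAction G X] {S : Finset X} {P : X → Prop} [DecidablePred P]
    (hS : ∀ (a : G), ∀ x ∈ S, a +ᵥ x ∈ S) (hP : ∀ x ∈ S, ∃! a : G, P (a +ᵥ x)) :
    Fintype.card G * (S.filter P).card = S.card := by
  calc
    Fintype.card G * (S.filter P).card = ∑ a : G, (S.filter fun x => P (a +ᵥ x)).card := by
      rw [← smul_eq_mul, ← Finset.card_univ, ← Finset.sum_const]
      refine Finset.sum_congr rfl fun a _ => ?_
      refine Finset.card_nbij' (-a +ᵥ ·) (a +ᵥ ·) ?_ ?_ ?_ ?_ <;>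
        simp +contextual [Set.MapsTo, Set.LeftInvOn, Set.RightInvOn, hS]
    _ = ∑ x ∈ S, (Finset.univ.filter fun a : G => P (a +ᵥ x)).card := by
      simp only [Finset.card_filter]
      exact Finset.sum_comm
    _ = S.card := by
      rw [Finset.card_eq_sum_ones]
      refine Finset.sum_congr rfl fun x hx => ?_
      obtain ⟨a, ha, ha_unique⟩ := hP x hx
      refine Finset.card_eq_one.mpr ⟨a, Finset.eq_singleton_iff_unique_mem.mpr ⟨?_, ?_⟩⟩
      · simpa using ha
      · simpa using ha_unique

lemma card_filter_injOn {ι A : Type*} [Fintype ι] [DecidableEq ι] [Fintype A] (B : Finset ι)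
    [DecidablePred fun g : ι → A => Set.InjOn g B] :
    (Finset.univ.filter fun g : ι → A => Set.InjOn g B).card =
      (Fintype.card A).descFactorial B.card * Fintype.card A ^ (Fintype.card ι - B.card) := by
  let e : {g : ι → A // Set.InjOn g B} ≃ ({i // i ∈ B} ↪ A) × ({i // i ∉ B} → A) :=
    ((Equiv.piEquivPiSubtypeProd (· ∈ B) fun _ => A).subtypeEquiv
      (q := fun p => Function.Injective p.1) fun _ => Set.injOn_iff_injective).trans <|
    Equiv.prodSubtypeFstEquivSubtypeProd.trans <|
    (Equiv.subtypeInjectiveEquivEmbedding _ _).prodCongr (Equiv.refl _)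
  rw [← Fintype.card_subtype, Fintype.card_congr e]
  simp [Fintype.card_embedding_eq, Fintype.card_subtype_compl]

end WeightedParking

namespace SStep

/-- The horizontal extent of a path once its diagonal steps are shrunk to width `1`. -/
def columns (α : List SStep) : ℕ := α.count right + α.count diag

lemma columns_append (α β : List SStep) : columns (α ++ β) = columns α + columns β := by
  simp only [columns, List.count_append]
  ring

@[simp]
lemma columns_cons_down (α : List SStep) : columns (down :: α) = columns α := by
  simp [columns]

@[simp]
lemma columns_cons_right (α : List SStep) : columns (right :: α) = columns α + 1 := by
  simp only [columns, List.count_cons_self, List.count_cons_of_ne (by decide : right ≠ diag)]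
  ring

@[simp]
lemma columns_cons_diag (α : List SStep) : columns (diag :: α) = columns α + 1 := by
  simp [columns, add_assoc]

end SStep

open SStep

section Path

lemma sPos_eq (r n : ℤ) (α : List SStep) :
    sPos r n α = (α.count .right + r * α.count .diag, n - α.count .down - α.count .diag) := by
  induction α using List.reverseRecOn with
  | nil => simp [sPos]
  | append_singleton α s ih =>
    have sPos_concat : sPos r n (α ++ [s]) = sPos r n α + sDisp r s := by simp [sPos]
    rw [sPos_concat, ih]
    cases s <;> ext <;> simp [sDisp] <;> ring

lemma isSchroder_iff {r n : ℕ} {α : List SStep} :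
    IsSchroder r n α ↔ α.count .down + α.count .diag = n ∧ α.count .right = r * α.count .down ∧
      ∀ β, β <+: α → β.count .right ≤ r * β.count .down := by
  have below_iff (β : List SStep) : (sPos r n β).1 + (r : ℤ) * (sPos r n β).2 ≤ r * n ↔
      β.count .right ≤ r * β.count .down := by
    rw [sPos_eq]
    zify
    constructor <;> intro h <;> linarith
  have endpoint_iff : sPos r n α = ((r : ℤ) * n, 0) ↔
      α.count .down + α.count .diag = n ∧ α.count .right = r * α.count .down := by
    rw [sPos_eq, Prod.mk.injEq]
    constructor
    · rintro ⟨hx, hy⟩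
      have hn : α.count .down + α.count .diag = n := by lia
      subst hn
      zify at hx ⊢
      exact ⟨trivial, by linarith⟩
    · rintro ⟨rfl, hright⟩
      rw [hright]
      push_cast
      constructor <;> ring
  simp only [IsSchroder, below_iff, endpoint_iff, and_assoc]

lemma mem_Sch_iff {r d k : ℕ} {α : List SStep} :
    α ∈ Sch r (d + k) d ↔ α.count .down = d ∧ α.count .diag = k ∧ α.count .right = r * d ∧
      ∀ β, β <+: α → β.count .right ≤ r * β.count .down := by
  simp only [Sch, Set.mem_ofPred_eq, isSchroder_iff, Nat.add_sub_cancel_left]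
  constructor
  · rintro ⟨⟨hn, hright, hβ⟩, hdiag⟩
    obtain rfl : α.count .down = d := by lia
    exact ⟨rfl, hdiag, hright, hβ⟩
  · rintro ⟨rfl, rfl, hright, hβ⟩
    exact ⟨⟨rfl, hright, hβ⟩, rfl⟩

end Path

section Code

lemma countP_bar_sCode (r x : ℤ) (α : List SStep) :
    (sCode r x α).countP (·.2) = α.count .diag := by
  induction α generalizing x with
  | nil => simp [sCode]
  | cons s t ih => cases s <;> simp [sCode, ih]

lemma countP_not_bar_sCode (r x : ℤ) (α : List SStep) :
    (sCode r x α).countP (!·.2) = α.count .down := by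
  induction α generalizing x with
  | nil => simp [sCode]
  | cons s t ih => cases s <;> simp [sCode, ih]

lemma le_fst_of_mem_sCode {r : ℤ} (hr : 0 ≤ r) {α : List SStep} {x : ℤ} {p : ℤ × Bool}
    (hp : p ∈ sCode r x α) : x ≤ p.1 := by
  induction α generalizing x with
  | nil => simp [sCode] at hp
  | cons s t ih =>
    cases s <;> simp only [sCode, List.mem_cons] at hp
    · rcases hp with rfl | hp
      · rfl
      · exact ih hp
    · have := ih hp
      lia
    · rcases hp with rfl | hp
      · rfl
      · have := ih hp
        lia

lemma sCode_one_append (x : ℤ) (α β : List SStep) :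
    sCode 1 x (α ++ β) = sCode 1 x α ++ sCode 1 (x + columns α) β := by
  induction α generalizing x with
  | nil => simp [sCode, columns]
  | cons s t ih => cases s <;> simp [sCode, ih, add_assoc, add_comm]

lemma sCode_replicate_down (r x : ℤ) (j : ℕ) :
    sCode r x (List.replicate j .down) = List.replicate j (x, false) := by
  induction j with
  | zero => simp [sCode]
  | succ j ih => simp [List.replicate_succ, sCode, ih]

lemma count_bar_sCode_one_le_one (x a : ℤ) (α : List SStep) :
    (sCode 1 x α).count (a, true) ≤ 1 := by
  induction α generalizing x with
  | nil => simp [sCode]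
  | cons s t ih =>
    cases s with
    | down => simpa [sCode] using ih x
    | right => simpa [sCode] using ih (x + 1)
    | diag =>
      rcases eq_or_ne x a with rfl | hxa
      · have : (x, true) ∉ sCode 1 (x + 1) t := fun hmem => by
          simpa using le_fst_of_mem_sCode zero_le_one hmem
        simp [sCode, List.count_eq_zero.mpr this]
      · simpa [sCode, hxa] using ih (x + 1)

lemma perm_replicate_append_filter_lt_fst {c : ℤ} {l : List (ℤ × Bool)}
    (hc : ∀ p ∈ l, c ≤ p.1) :
    l.Perm (List.replicate (l.count (c, false)) (c, false) ++
      (List.replicate (l.count (c, true)) (c, true) ++ l.filter (c < ·.1))) := by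
  rw [List.perm_iff_count]
  rintro ⟨a, b⟩
  simp only [List.count_append, List.count_replicate]
  rcases lt_trichotomy a c with hac | rfl | hca
  · have hl : (a, b) ∉ l := fun hmem => (hc _ hmem).not_gt hac
    have hfilter : (a, b) ∉ l.filter (c < ·.1) := fun hmem => hl (List.mem_of_mem_filter hmem)
    simp [hac.ne', List.count_eq_zero.mpr hl, List.count_eq_zero.mpr hfilter]
  · have : (a, b) ∉ l.filter (a < ·.1) := by simp
    rw [List.count_eq_zero.mpr this]
    cases b <;> simp
  · rw [List.count_filter (by simpa using hca)]
    simp [hca.ne]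

lemma exists_perm_sCode_one (m : ℕ) {c : ℤ} {l : List (ℤ × Bool)}
    (hmem : ∀ p ∈ l, c ≤ p.1 ∧ p.1 < c + m) (hbar : ∀ a, l.count (a, true) ≤ 1) :
    ∃ α, columns α = m ∧ l.Perm (sCode 1 c α) := by
  induction m generalizing c l with
  | zero =>
    obtain rfl : l = [] := List.eq_nil_iff_forall_not_mem.mpr fun p hp => by
      have := hmem p hp
      lia
    exact ⟨[], rfl, .nil⟩
  | succ m ih =>
    obtain ⟨t, ht_columns, ht_perm⟩ := ih (c := c + 1) (l := l.filter (c < ·.1))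
      (fun p hp => by
        simp only [List.mem_filter, decide_eq_true_eq] at hp
        have := hmem p hp.1
        lia)
      (fun a => (List.filter_sublist.count_le _).trans (hbar a))
    obtain ⟨s, hs_columns, hs_code⟩ : ∃ s, columns [s] = 1 ∧
        sCode 1 c [s] = List.replicate (l.count (c, true)) (c, true) := by
      rcases Nat.le_one_iff_eq_zero_or_eq_one.mp (hbar c) with h | h
      · exact ⟨.right, rfl, by rw [h]; rfl⟩
      · exact ⟨.diag, rfl, by rw [h]; rfl⟩
    have columns_down : columns (List.replicate (l.count (c, false)) .down) = 0 := by
      simp [columns, List.count_replicate]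
    refine ⟨List.replicate (l.count (c, false)) .down ++ ([s] ++ t), ?_, ?_⟩
    · rw [columns_append, columns_append, columns_down, hs_columns, ht_columns]
      lia
    · calc
        l.Perm _ := perm_replicate_append_filter_lt_fst fun p hp => (hmem p hp).1
        List.Perm _ _ := (ht_perm.append_left _).append_left _
        _ = _ := by
          rw [sCode_one_append, sCode_one_append, sCode_replicate_down, columns_down,
            Nat.cast_zero, add_zero, hs_code, hs_columns, Nat.cast_one]

end Code

section Weight

/-- The number of columns that an entry accounts for in the inequality characterising codes: `r` for
a down step, `1` for a diagonal step shrunk to width `1`. -/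
def entryWeight (r : ℕ) (p : ℤ × Bool) : ℕ := if p.2 then 1 else r

/-- The total weight of the entries with value less than `x`. -/
def weightBelow (r : ℕ) (l : List (ℤ × Bool)) (x : ℤ) : ℕ :=
  (l.map fun p => if p.1 < x then entryWeight r p else 0).sum

lemma sum_map_entryWeight (r : ℕ) (l : List (ℤ × Bool)) :
    (l.map (entryWeight r)).sum = r * l.countP (!·.2) + l.countP (·.2) := by
  induction l with
  | nil => simp
  | cons p t ih =>
    obtain ⟨a, b⟩ := p
    cases b <;> simp [entryWeight, ih] <;> ring

lemma weightBelow_le_sum (r : ℕ) (l : List (ℤ × Bool)) (x : ℤ) :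
    weightBelow r l x ≤ (l.map (entryWeight r)).sum :=
  List.sum_le_sum fun p _ => by split_ifs <;> simp

lemma weightBelow_append (r : ℕ) (l l' : List (ℤ × Bool)) (x : ℤ) :
    weightBelow r (l ++ l') x = weightBelow r l x + weightBelow r l' x := by
  simp [weightBelow]

lemma weightBelow_cons_of_lt (r : ℕ) {p : ℤ × Bool} {x : ℤ} (h : p.1 < x)
    (l : List (ℤ × Bool)) : weightBelow r (p :: l) x = entryWeight r p + weightBelow r l x := by
  simp [weightBelow, h]

lemma weightBelow_eq_zero (r : ℕ) {l : List (ℤ × Bool)} {x : ℤ} (h : ∀ p ∈ l, x ≤ p.1) :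
    weightBelow r l x = 0 := by
  simp only [weightBelow, List.sum_eq_zero_iff, List.forall_mem_map]
  exact fun p hp => if_neg (h p hp).not_gt

lemma weightBelow_eq_of_perm (r : ℕ) {l l' : List (ℤ × Bool)} (h : l.Perm l') (x : ℤ) :
    weightBelow r l x = weightBelow r l' x :=
  (h.map _).sum_eq

lemma fst_lt_of_sum_le_weightBelow {r : ℕ} (hr : 1 ≤ r) {l : List (ℤ × Bool)} {x : ℤ}
    (h : (l.map (entryWeight r)).sum ≤ weightBelow r l x) {p : ℤ × Bool} (hp : p ∈ l) :
    p.1 < x := by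
  by_contra! hpx
  refine h.not_gt (List.sum_lt_sum _ _ (fun q _ => by split_ifs <;> simp) ⟨p, hp, ?_⟩)
  rw [if_neg hpx.not_gt, entryWeight]
  split_ifs <;> lia

lemma weightBelow_sCode_one_le_of_prefix (r : ℕ) (x : ℤ) {α β : List SStep} (hβ : β <+: α) :
    weightBelow r (sCode 1 x α) (x + columns β) ≤ r * β.count .down + β.count .diag := by
  obtain ⟨γ, rfl⟩ := hβ
  calc
    weightBelow r (sCode 1 x (β ++ γ)) (x + columns β)
        = weightBelow r (sCode 1 x β) (x + columns β) := by
      rw [sCode_one_append, weightBelow_append, Nat.add_eq_left]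
      exact weightBelow_eq_zero r fun p hp => le_fst_of_mem_sCode zero_le_one hp
    _ ≤ ((sCode 1 x β).map (entryWeight r)).sum := weightBelow_le_sum ..
    _ = r * β.count .down + β.count .diag := by
      rw [sum_map_entryWeight, countP_not_bar_sCode, countP_bar_sCode]

lemma exists_prefix_le_weightBelow_sCode_one (r : ℕ) (x : ℤ) (α : List SStep) {j : ℕ}
    (hj : j ≤ columns α) : ∃ β, β <+: α ∧ columns β = j ∧
      r * β.count .down + β.count .diag ≤ weightBelow r (sCode 1 x α) (x + j) := by
  induction α generalizing x j with
  | nil => exact ⟨[], List.nil_prefix, (Nat.le_zero.mp hj).symm, by simp⟩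
  | cons s t ih =>
    cases j with
    | zero => exact ⟨[], List.nil_prefix, rfl, by simp⟩
    | succ j =>
      have hx : x + (j + 1 : ℕ) = x + 1 + j := by lia
      cases s with
      | down =>
        obtain ⟨β, hβ, hcol, hle⟩ := ih x (j := j + 1) (by simpa using hj)
        refine ⟨.down :: β, by simpa using hβ, by simpa using hcol, ?_⟩
        rw [sCode, weightBelow_cons_of_lt r (by lia)]
        calc
          _ = r + (r * β.count .down + β.count .diag) := by simp; ring
          _ ≤ _ := Nat.add_le_add_left hle r
      | right =>
        obtain ⟨β, hβ, hcol, hle⟩ := ih (x + 1) (j := j) (by simpa using hj)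
        refine ⟨.right :: β, by simpa using hβ, by simpa using hcol, ?_⟩
        rw [hx]
        simpa [sCode] using hle
      | diag =>
        obtain ⟨β, hβ, hcol, hle⟩ := ih (x + 1) (j := j) (by simpa using hj)
        refine ⟨.diag :: β, by simpa using hβ, by simpa using hcol, ?_⟩
        rw [sCode, hx, weightBelow_cons_of_lt r (by lia)]
        calc
          _ = 1 + (r * β.count .down + β.count .diag) := by simp; ring
          _ ≤ _ := Nat.add_le_add_left hle 1

theorem forall_prefix_right_le_iff {r : ℕ} {α : List SStep} :
    (∀ β, β <+: α → β.count .right ≤ r * β.count .down) ↔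
      ∀ j ≤ columns α, j ≤ weightBelow r (sCode 1 0 α) j := by
  constructor
  · intro hα j hj
    obtain ⟨β, hβ, rfl, hle⟩ := exists_prefix_le_weightBelow_sCode_one r 0 α hj
    rw [zero_add] at hle
    have := hα β hβ
    unfold columns at *
    lia
  · intro hα β hβ
    have h₁ := hα (columns β) (Nat.add_le_add (hβ.count_le _) (hβ.count_le _))
    have h₂ := weightBelow_sCode_one_le_of_prefix r 0 hβ
    rw [zero_add] at h₂
    have := h₁.trans h₂
    unfold columns at this
    lia

end Weight

section Stretch

/-- The number of barred entries with value less than `x`. -/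
def barsBelow (l : List (ℤ × Bool)) (x : ℤ) : ℕ := l.countP fun q => q.2 ∧ q.1 < x

/-- Widens every diagonal step by `c` at the level of codes: an entry moves by `c` for each barred
entry to its left. -/
def stretch (c : ℤ) (l : List (ℤ × Bool)) : List (ℤ × Bool) :=
  l.map fun p => (p.1 + c * barsBelow l p.1, p.2)

lemma barsBelow_mono (l : List (ℤ × Bool)) : Monotone (barsBelow l) := fun x y hxy =>
  List.countP_mono_left fun q _ hq => by
    simp only [decide_eq_true_eq] at hq ⊢
    exact ⟨hq.1, hq.2.trans_le hxy⟩

lemma barsBelow_eq_zero {l : List (ℤ × Bool)} {x : ℤ} (h : ∀ p ∈ l, x ≤ p.1) :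
    barsBelow l x = 0 :=
  List.countP_eq_zero.mpr fun p hp => by simpa using fun _ => h p hp

lemma strictMono_add_mul_barsBelow {c : ℤ} (hc : 0 ≤ c) (l : List (ℤ × Bool)) :
    StrictMono fun x : ℤ => x + c * barsBelow l x :=
  strictMono_id.add_monotone fun _ _ hxy =>
    mul_le_mul_of_nonneg_left (Int.ofNat_le.mpr (barsBelow_mono l hxy)) hc

lemma barsBelow_stretch {c : ℤ} (hc : 0 ≤ c) (l : List (ℤ × Bool)) (x : ℤ) :
    barsBelow (stretch c l) (x + c * barsBelow l x) = barsBelow l x := by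
  rw [barsBelow, stretch, List.countP_map]
  refine List.countP_congr fun q _ => ?_
  simp [(strictMono_add_mul_barsBelow hc l).lt_iff_lt]

lemma stretch_neg_stretch {c : ℤ} (hc : 0 ≤ c) (l : List (ℤ × Bool)) :
    stretch (-c) (stretch c l) = l := by
  calc
    stretch (-c) (stretch c l) = l.map id := by
      rw [stretch]
      conv_lhs => arg 2; rw [stretch]
      rw [List.map_map]
      refine List.map_congr_left fun p _ => ?_
      simp [barsBelow_stretch hc]
    _ = l := List.map_id l

lemma stretch_injective {c : ℤ} (hc : 0 ≤ c) : Function.Injective (stretch c) :=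
  Function.LeftInverse.injective (stretch_neg_stretch hc)

lemma stretch_eq_map_of_perm (c : ℤ) {l l' : List (ℤ × Bool)} (h : l.Perm l') :
    stretch c l = l.map fun p => (p.1 + c * barsBelow l' p.1, p.2) := by
  have : barsBelow l = barsBelow l' := funext fun x => h.countP_eq _
  rw [stretch, this]

lemma perm_stretch_iff (c : ℤ) {l l' : List (ℤ × Bool)} :
    l.Perm (stretch c l') ↔ ∃ k, k.Perm l' ∧ stretch c k = l := by
  rw [stretch, ← congrFun₂ (List.eq_map_comp_perm _) l l']
  refine exists_congr fun k => and_comm.trans (and_congr_right fun hk => ?_)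
  rw [stretch_eq_map_of_perm c hk, eq_comm]

lemma barsBelow_cons_bar {a x : ℤ} (h : a < x) (l : List (ℤ × Bool)) :
    barsBelow ((a, true) :: l) x = barsBelow l x + 1 := by
  simp [barsBelow, h]

lemma sCode_one_add (c x b : ℤ) (α : List SStep) :
    sCode (1 + c) (x + c * b) α =
      (sCode 1 x α).map fun p => (p.1 + c * (b + barsBelow (sCode 1 x α) p.1), p.2) := by
  induction α generalizing x b with
  | nil => simp [sCode]
  | cons s t ih =>
    have no_bars : barsBelow (sCode 1 x (s :: t)) x = 0 :=
      barsBelow_eq_zero fun p hp => le_fst_of_mem_sCode zero_le_one hp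
    cases s with
    | down =>
      simp only [sCode, List.map_cons] at no_bars ⊢
      rw [no_bars, ih]
      simp [barsBelow]
    | right =>
      simp only [sCode]
      rw [← ih]
      ring_nf
    | diag =>
      simp only [sCode, List.map_cons] at no_bars ⊢
      rw [no_bars, show x + c * b + (1 + c) = x + 1 + c * (b + 1) by ring, ih]
      congr 1
      · simp
      · refine List.map_congr_left fun p hp => ?_
        have hxp : x < p.1 := le_fst_of_mem_sCode zero_le_one hp
        rw [barsBelow_cons_bar hxp]
        push_cast
        ring_nf

lemma stretch_sCode_one (c : ℤ) (α : List SStep) :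
    stretch c (sCode 1 0 α) = sCode (1 + c) 0 α := by
  simpa [stretch] using (sCode_one_add c 0 0 α).symm

lemma Pk_eq_image_stretch (r n d : ℕ) :
    Pk r n d = stretch (r - 1) '' {l | ∃ α ∈ Sch r n d, l.Perm (sCode 1 0 α)} := by
  ext l
  have hcode (α : List SStep) : sCode r 0 α = stretch (r - 1) (sCode 1 0 α) := by
    rw [stretch_sCode_one, add_sub_cancel]
  simp only [Pk, hcode, perm_stretch_iff, Set.mem_image, Set.mem_ofPred_eq]
  grind

end Stretch

section CompressedParking

/-- `l` is a rearrangement of the code, with diagonal steps shrunk to width `1`, of a path with `d`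
down steps and `k` diagonal steps, expressed through the entries of `l` alone; see
`isCompressedParking_iff_exists_perm`. -/
structure IsCompressedParking (r d k : ℕ) (l : List (ℤ × Bool)) : Prop where
  countP_not_bar : l.countP (!·.2) = d
  countP_bar : l.countP (·.2) = k
  count_bar_le_one : ∀ a, l.count (a, true) ≤ 1
  nonneg : ∀ p ∈ l, 0 ≤ p.1
  le_weightBelow : ∀ x ≤ r * d + k, x ≤ weightBelow r l x

lemma IsCompressedParking.lt {r d k : ℕ} (hr : 1 ≤ r) {l : List (ℤ × Bool)}
    (hl : IsCompressedParking r d k l) {p : ℤ × Bool} (hp : p ∈ l) : p.1 < (r * d + k : ℕ) := by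
  refine fst_lt_of_sum_le_weightBelow hr ?_ hp
  rw [sum_map_entryWeight, hl.countP_not_bar, hl.countP_bar]
  exact hl.le_weightBelow _ le_rfl

lemma IsCompressedParking.of_perm {r d k : ℕ} {l l' : List (ℤ × Bool)}
    (hl : IsCompressedParking r d k l) (h : l.Perm l') : IsCompressedParking r d k l' where
  countP_not_bar := h.countP_eq _ ▸ hl.countP_not_bar
  countP_bar := h.countP_eq _ ▸ hl.countP_bar
  count_bar_le_one a := h.count_eq _ ▸ hl.count_bar_le_one a
  nonneg p hp := hl.nonneg p (h.mem_iff.mpr hp)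
  le_weightBelow x hx := weightBelow_eq_of_perm r h x ▸ hl.le_weightBelow x hx

lemma isCompressedParking_sCode_one_of_mem_Sch {r d k : ℕ} {α : List SStep}
    (hα : α ∈ Sch r (d + k) d) : IsCompressedParking r d k (sCode 1 0 α) := by
  obtain ⟨hdown, hdiag, hright, hprefix⟩ := mem_Sch_iff.mp hα
  have hcol : columns α = r * d + k := by rw [columns, hdiag, hright]
  exact {
    countP_not_bar := by rw [countP_not_bar_sCode, hdown]
    countP_bar := by rw [countP_bar_sCode, hdiag]
    count_bar_le_one := fun a => count_bar_sCode_one_le_one 0 a α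
    nonneg := fun p hp => le_fst_of_mem_sCode zero_le_one hp
    le_weightBelow := hcol ▸ forall_prefix_right_le_iff.mp hprefix }

lemma IsCompressedParking.mem_Sch {r d k : ℕ} {α : List SStep}
    (h : IsCompressedParking r d k (sCode 1 0 α)) (hα : columns α = r * d + k) :
    α ∈ Sch r (d + k) d := by
  have hdown : α.count .down = d := countP_not_bar_sCode 1 0 α ▸ h.countP_not_bar
  have hdiag : α.count .diag = k := countP_bar_sCode 1 0 α ▸ h.countP_bar
  have hright : α.count .right = r * d := by
    unfold columns at hα
    lia
  exact mem_Sch_iff.mpr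
    ⟨hdown, hdiag, hright, forall_prefix_right_le_iff.mpr (hα ▸ h.le_weightBelow)⟩

theorem isCompressedParking_iff_exists_perm {r d k : ℕ} (hr : 1 ≤ r) {l : List (ℤ × Bool)} :
    IsCompressedParking r d k l ↔ ∃ α ∈ Sch r (d + k) d, l.Perm (sCode 1 0 α) := by
  constructor
  · intro hl
    obtain ⟨α, hα, hperm⟩ := exists_perm_sCode_one (r * d + k) (c := 0)
      (fun p hp => ⟨hl.nonneg p hp, by simpa using hl.lt hr hp⟩) hl.count_bar_le_one
    exact ⟨α, (hl.of_perm hperm).mem_Sch hα, hperm⟩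
  · rintro ⟨α, hα, hperm⟩
    exact (isCompressedParking_sCode_one_of_mem_Sch hα).of_perm hperm.symm

end CompressedParking

section Word

/-- The weight of the `i`-th letter of a word whose barred positions form `B`. -/
def markWeight {ι : Type*} [DecidableEq ι] (r : ℕ) (B : Finset ι) (i : ι) : ℕ :=
  if i ∈ B then 1 else r

lemma sum_markWeight {ι : Type*} [Fintype ι] [DecidableEq ι] (r : ℕ) (B : Finset ι) :
    ∑ i, markWeight r B i = r * Bᶜ.card + B.card := by
  simp only [markWeight, ← Finset.sum_compl_add_sum B]
  rw [Finset.sum_congr rfl fun i hi => if_neg (Finset.mem_compl.mp hi),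
    Finset.sum_congr rfl fun i hi => if_pos hi]
  simp [mul_comm]

/-- The word `g` over the residues modulo `N`, read in `{0, …, N - 1}`, with bars at the positions
in `B`. -/
def markedWord {n N : ℕ} (B : Finset (Fin n)) (g : Fin n → ZMod N) : List (ℤ × Bool) :=
  List.ofFn fun i => ((g i).val, decide (i ∈ B))

lemma countP_ofFn {A : Type*} {n : ℕ} (f : Fin n → A) (p : A → Bool) :
    (List.ofFn f).countP p = (Finset.univ.filter fun i => p (f i)).card := by
  rw [List.ofFn_eq_map, List.countP_map, ← List.toFinset_finRange,
    (List.nodup_finRange n).card_eq_countP]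
  simp [Function.comp_def]

variable {n N : ℕ}

lemma exists_markedWord_eq {l : List (ℤ × Bool)} (hlen : l.length = n)
    (hmem : ∀ p ∈ l, 0 ≤ p.1 ∧ p.1 < N) :
    ∃ (B : Finset (Fin n)) (g : Fin n → ZMod N), markedWord B g = l := by
  subst hlen
  refine ⟨Finset.univ.filter fun i => l[i].2, fun i => (l[i].1.toNat : ZMod N), ?_⟩
  refine List.ext_getElem (by simp [markedWord]) fun i _ hi => ?_
  obtain ⟨h0, hN⟩ := hmem _ (List.getElem_mem hi)
  ext
  · simp [markedWord, -ZMod.natCast_val, h0, Int.emod_eq_of_lt h0 hN]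
  · simp [markedWord]

lemma weightBelow_markedWord (r : ℕ) (B : Finset (Fin n)) (g : Fin n → ZMod N) (x : ℕ) :
    weightBelow r (markedWord B g) x = ∑ i with (g i).val < x, markWeight r B i := by
  simp [weightBelow, markedWord, List.map_ofFn, List.sum_ofFn, Finset.sum_filter, entryWeight,
    markWeight, -ZMod.natCast_val]

variable [NeZero N]

lemma markedWord_injective :
    Function.Injective fun q : (_ : Finset (Fin n)) × (Fin n → ZMod N) =>
      markedWord q.1 q.2 := by
  rintro ⟨B, g⟩ ⟨B', g'⟩ h
  have entries_eq (i : Fin n) : g i = g' i ∧ (i ∈ B ↔ i ∈ B') := by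
    simpa [-ZMod.natCast_val, (ZMod.val_injective N).eq_iff] using
      congrFun (List.ofFn_injective h) i
  obtain rfl : B = B' := Finset.ext fun i => (entries_eq i).2
  obtain rfl : g = g' := funext fun i => (entries_eq i).1
  rfl

lemma forall_count_markedWord_le_one_iff {B : Finset (Fin n)} {g : Fin n → ZMod N} :
    (∀ a, (markedWord B g).count (a, true) ≤ 1) ↔ Set.InjOn g B := by
  have count_eq (a : ℤ) : (markedWord B g).count (a, true) =
      (Finset.univ.filter fun i => ((g i).val : ℤ) = a ∧ i ∈ B).card := by
    rw [List.count, markedWord, countP_ofFn]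
    simp
  simp only [count_eq, Finset.card_le_one, Finset.mem_filter, Finset.mem_univ, true_and]
  constructor
  · intro h i hi j hj hij
    exact h (g i).val i ⟨rfl, hi⟩ j ⟨by rw [hij], hj⟩
  · rintro h a i ⟨hia, hi⟩ j ⟨hja, hj⟩
    exact h hi hj (ZMod.val_injective N (by lia))

lemma isCompressedParking_markedWord_iff {r d k : ℕ} {B : Finset (Fin (d + k))}
    {g : Fin (d + k) → ZMod (r * d + k + 1)} :
    IsCompressedParking r d k (markedWord B g) ↔
      B.card = k ∧ Set.InjOn g B ∧ IsWeightedParking (markWeight r B) g := by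
  have countP_bar : (markedWord B g).countP (·.2) = B.card := by
    rw [markedWord, countP_ofFn]
    simp
  have countP_not_bar : (markedWord B g).countP (!·.2) = d + k - B.card := by
    rw [markedWord, countP_ofFn]
    simp [Finset.filter_not, Finset.card_sdiff]
  have le_weightBelow_iff : (∀ x ≤ r * d + k, x ≤ weightBelow r (markedWord B g) x) ↔
      IsWeightedParking (markWeight r B) g := by
    simp only [weightBelow_markedWord, IsWeightedParking, Nat.lt_succ_iff]
  constructor
  · intro h
    exact ⟨countP_bar ▸ h.countP_bar, forall_count_markedWord_le_one_iff.mp h.count_bar_le_one,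
      le_weightBelow_iff.mp h.le_weightBelow⟩
  · rintro ⟨hB, hinj, hpark⟩
    exact {
      countP_not_bar := by rw [countP_not_bar, hB, Nat.add_sub_cancel]
      countP_bar := by rw [countP_bar, hB]
      count_bar_le_one := forall_count_markedWord_le_one_iff.mpr hinj
      nonneg := by simp [markedWord, List.mem_ofFn, -ZMod.natCast_val]
      le_weightBelow := le_weightBelow_iff.mpr hpark }

open Classical in
theorem ncard_setOf_isCompressedParking {r : ℕ} (d k : ℕ) (hr : 1 ≤ r) :
    {l | IsCompressedParking r d k l}.ncard =
      ∑ B ∈ (Finset.univ : Finset (Fin (d + k))).powersetCard k,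
        (Finset.univ.filter fun g : Fin (d + k) → ZMod (r * d + k + 1) =>
          Set.InjOn g B ∧ IsWeightedParking (markWeight r B) g).card := by
  rw [← Finset.card_sigma, ← Set.ncard_coe_finset,
    ← Set.ncard_image_of_injective _ markedWord_injective]
  congr 1
  ext l
  simp only [Set.mem_ofPred_eq, Set.mem_image, Finset.mem_coe, Finset.mem_sigma,
    Finset.mem_powersetCard_univ, Finset.mem_filter_univ, Sigma.exists]
  constructor
  · intro hl
    have hlen : l.length = d + k := by
      rw [List.length_eq_countP_add_countP (·.2), hl.countP_bar, add_comm, ← hl.countP_not_bar]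
      simp
    obtain ⟨B, g, rfl⟩ := exists_markedWord_eq (N := r * d + k + 1) hlen
      fun p hp => ⟨hl.nonneg p hp, by have := hl.lt hr hp; lia⟩
    exact ⟨B, g, isCompressedParking_markedWord_iff.mp hl, rfl⟩
  · rintro ⟨B, g, h, rfl⟩
    exact isCompressedParking_markedWord_iff.mpr h

open Classical in
theorem mul_card_injOn_isWeightedParking {r d k : ℕ} {B : Finset (Fin (d + k))}
    (hB : B.card = k) :
    (r * d + k + 1) * (Finset.univ.filter fun g : Fin (d + k) → ZMod (r * d + k + 1) =>
        Set.InjOn g B ∧ IsWeightedParking (markWeight r B) g).card =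
      (r * d + k + 1).descFactorial k * (r * d + k + 1) ^ d := by
  have sum_add_one : ∑ i, markWeight r B i + 1 = r * d + k + 1 := by
    rw [sum_markWeight, Finset.card_compl, hB, Fintype.card_fin, Nat.add_sub_cancel]
  have card_mul := card_mul_card_filter_of_existsUnique_vadd
    (S := Finset.univ.filter fun g : Fin (d + k) → ZMod (r * d + k + 1) => Set.InjOn g B)
    (P := IsWeightedParking (markWeight r B)) (G := ZMod (r * d + k + 1))
    (fun a g hg => by simpa [Set.InjOn] using hg)
    (fun g _ => existsUnique_isWeightedParking_vadd sum_add_one g)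
  rw [Finset.filter_filter, card_filter_injOn, ZMod.card, hB, Fintype.card_fin,
    Nat.add_sub_cancel] at card_mul
  exact card_mul

end Word

theorem mul_ncard_Pk {r : ℕ} (hr : 1 ≤ r) (d k : ℕ) :
    (r * d + k + 1) * (Pk r (d + k) d).ncard =
      (d + k).choose k * ((r * d + k + 1).descFactorial k * (r * d + k + 1) ^ d) := by
  have ncard_eq : (Pk r (d + k) d).ncard = {l | IsCompressedParking r d k l}.ncard := by
    simp only [Pk_eq_image_stretch, isCompressedParking_iff_exists_perm hr]
    exact Set.ncard_image_of_injective _ (stretch_injective (by lia))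
  rw [ncard_eq, ncard_setOf_isCompressedParking d k hr, Finset.mul_sum,
    Finset.sum_congr rfl fun B hB =>
      mul_card_injOn_isWeightedParking (Finset.mem_powersetCard_univ.mp hB)]
  simp

/-- For `n ≥ 1`, `r ≥ 1`, `0 ≤ d ≤ n`:
`d! * (d*(r-1)+n+1) * |P_{n,d}^r| = n! * C(d*(r-1)+n+1, n-d) * (d*(r-1)+n+1)^d`,
i.e. `|P_{n,d}^r| = (n!/d!) * C(d*(r-1)+n+1, n-d) * (d*(r-1)+n+1)^(d-1)`. -/
theorem parking_count (r n d : ℕ) (hr : 1 ≤ r) (hn : 1 ≤ n) (hd : d ≤ n) :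
    Nat.factorial d * (d * (r - 1) + n + 1) * (Pk r n d).ncard
      = Nat.factorial n * Nat.choose (d * (r - 1) + n + 1) (n - d)
          * (d * (r - 1) + n + 1) ^ d := by
  obtain ⟨k, rfl⟩ := Nat.exists_eq_add_of_le hd
  have hN : d * (r - 1) + (d + k) + 1 = r * d + k + 1 := by
    obtain ⟨q, rfl⟩ := Nat.exists_eq_add_of_le' hr
    rw [Nat.add_sub_cancel]
    ring
  rw [hN, mul_assoc, mul_ncard_Pk hr, Nat.descFactorial_eq_factorial_mul_choose,
    Nat.add_sub_cancel_left, ← Nat.add_choose_mul_factorial_mul_factorial d k]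
  ring
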